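/- Let Y_+ additionally be pointed, let y_0 be a minimal point of (P(0)), let L_{y_0} be the Lagrange process of (P(0)) at y_0, and assume the Slater condition. Then L_{y_0}(−z) = D(V+Y_+)(0,y_0)(z) for every z ∈ Z, where D(V+Y_+)(0,y_0) is the contingent derivative of the set-valued map V+Y_+ at (0, y_0). -/

import Mathlib

open Pointwise Filter Topology

namespace Paper

section Defs

variable {E : Type*} [NormedAddCommGroup E] [NormedSpace ℝ E]

/-- The cone hull of a set: all nonnegative multiples of its elements. -/
def coneHull (A : Set E) : Set E := {x | ∃ r : ℝ, 0 ≤ r ∧ ∃ a ∈ A, x = r • a}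

/-- A cone: a nonempty set closed under multiplication by nonnegative scalars. -/
def IsCone (K : Set E) : Prop := K.Nonempty ∧ ∀ r : ℝ, 0 ≤ r → ∀ x ∈ K, r • x ∈ K

/-- A pointed cone: `K ∩ (-K) = {0}`. -/
def IsPointed (K : Set E) : Prop := K ∩ (-K) = {0}

/-- A proper cone: `{0} ≠ K ≠ E`. -/
def IsProper (K : Set E) : Prop := K ≠ {0} ∧ K ≠ Set.univ

/-- A solid cone: nonempty interior. -/
def IsSolid (K : Set E) : Prop := (interior K).Nonempty

/-- The contingent cone to `A` at `w`. -/
def contingentCone (A : Set E) (w : E) : Set E :=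
  {v | Filter.liminf (fun h : ℝ => Metric.infDist (w + h • v) A / h) (𝓝[>] (0:ℝ)) = 0}

end Defs

section SV

variable {X Y Z : Type*}
  [NormedAddCommGroup X] [NormedSpace ℝ X]
  [NormedAddCommGroup Y] [NormedSpace ℝ Y]
  [NormedAddCommGroup Z] [NormedSpace ℝ Z]

/-- The graph of a set-valued map. -/
def graph (Δ : Z → Set Y) : Set (Z × Y) := {p | p.2 ∈ Δ p.1}

/-- The image of a set by a set-valued map. -/
def imageSet (Δ : Z → Set Y) (A : Set Z) : Set Y := ⋃ w ∈ A, Δ w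

/-- The feasible set map `S(z) = {x ∈ Ω : G(x) ∩ (z - Z₊) ≠ ∅}`. -/
def Smap (Ω : Set X) (G : X → Set Z) (Zp : Set Z) (z : Z) : Set X :=
  {x | x ∈ Ω ∧ (G x ∩ ({z} - Zp)).Nonempty}

/-- The value map `V(z) = F(S(z))`. -/
def Vmap (Ω : Set X) (F : X → Set Y) (G : X → Set Z) (Zp : Set Z) (z : Z) : Set Y :=
  ⋃ x ∈ Smap Ω G Zp z, F x

/-- The map `(V + Y₊)(z) = V(z) + Y₊`. -/
def VplusMap (Ω : Set X) (F : X → Set Y) (G : X → Set Z) (Zp : Set Z) (Yp : Set Y)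
    (z : Z) : Set Y :=
  Vmap Ω F G Zp z + Yp

/-- The graph of `V + Y₊`. -/
def GraphVplus (Ω : Set X) (F : X → Set Y) (G : X → Set Z) (Zp : Set Z) (Yp : Set Y) :
    Set (Z × Y) :=
  {p : Z × Y | p.2 ∈ Vmap Ω F G Zp p.1 + Yp}

/-- Minimal points of a set `A` with respect to the cone `Yp`. -/
def MinSet (Yp : Set Y) (A : Set Y) : Set Y :=
  {a ∈ A | A ∩ ({a} - Yp) ⊆ {a} + Yp}

/-- The marginal map `M(z) = Min(V(z))`. -/
def Mmap (Ω : Set X) (F : X → Set Y) (G : X → Set Z) (Zp : Set Z) (Yp : Set Y)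
    (z : Z) : Set Y :=
  MinSet Yp (Vmap Ω F G Zp z)

/-- `y₀` is a nondominated point of `(P(0))`. -/
def Nondominated (Ω : Set X) (F : X → Set Y) (G : X → Set Z) (Zp : Set Z) (Yp : Set Y)
    (y0 : Y) : Prop :=
  y0 ∈ closure (Vmap Ω F G Zp 0) ∧
    Vmap Ω F G Zp 0 ∩ ({y0} - Yp) ⊆ {y0} + Yp

/-- `y₀` is a minimal point of `(P(0))`. -/
def MinimalPoint (Ω : Set X) (F : X → Set Y) (G : X → Set Z) (Zp : Set Z) (Yp : Set Y)
    (y0 : Y) : Prop :=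
  y0 ∈ Vmap Ω F G Zp 0 ∧
    Vmap Ω F G Zp 0 ∩ ({y0} - Yp) ⊆ {y0} + Yp

/-- The set `S_{Y₊}(y₀)` of separating pairs of continuous linear functionals. -/
def Sdual (Ω : Set X) (F : X → Set Y) (G : X → Set Z) (Zp : Set Z) (Yp : Set Y) (y0 : Y) :
    Set ((Z →L[ℝ] ℝ) × (Y →L[ℝ] ℝ)) :=
  {p | (∀ z' ∈ -Zp, ∀ y' ∈ ({y0} : Set Y) - Yp, p.1 z' + p.2 y' ≤ p.2 y0) ∧
       (∀ q ∈ GraphVplus Ω F G Zp Yp, p.2 y0 ≤ p.1 q.1 + p.2 q.2)}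

/-- `P(Z,Y)`: closed convex processes with full domain. -/
def PZY : Set (Z → Set Y) :=
  {Δ | IsClosed (graph Δ) ∧ Convex ℝ (graph Δ) ∧ IsCone (graph Δ) ∧ ∀ z, (Δ z).Nonempty}

/-- The set `Λ_{(z*,y*)}` of processes associated to `(z*,y*)`. -/
def Lambda (zs : Z →L[ℝ] ℝ) (ys : Y →L[ℝ] ℝ) : Set (Z → Set Y) :=
  {Δ | Δ ∈ PZY ∧ graph Δ \ {0} ⊆ {p : Z × Y | 0 < -(zs p.1) + ys p.2}}

/-- The set `Γ_{y₀}` of processes associated to `y₀`. -/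
def Gamma (Ω : Set X) (F : X → Set Y) (G : X → Set Z) (Zp : Set Z) (Yp : Set Y) (y0 : Y) :
    Set (Z → Set Y) :=
  ⋃ p ∈ Sdual Ω F G Zp Yp y0 \ {0}, Lambda p.1 p.2

/-- The Slater constraint qualification. -/
def Slater (Ω : Set X) (F : X → Set Y) (G : X → Set Z) (Zp : Set Z) : Prop :=
  ∃ x1 ∈ Ω, (F x1).Nonempty ∧ (G x1 ∩ (-interior Zp)).Nonempty

/-- `Ψ(Δ) = ∪_{x∈Ω}(F(x) + Δ(G(x)+Z₊))`. -/
def Umap (Ω : Set X) (F : X → Set Y) (G : X → Set Z) (Zp : Set Z) (Δ : Z → Set Y) : Set Y :=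
  ⋃ x ∈ Ω, (F x + imageSet Δ (G x + Zp))

/-- The dual map `Φ(Δ)`: nondominated points of the closure of `Ψ(Δ)`. -/
def Phi (Ω : Set X) (F : X → Set Y) (G : X → Set Z) (Zp : Set Z) (Yp : Set Y)
    (Δ : Z → Set Y) : Set Y :=
  {y ∈ closure (Umap Ω F G Zp Δ) | Umap Ω F G Zp Δ ∩ ({y} - Yp) ⊆ {y} + Yp}

/-- `Δ` is a Lagrange multiplier of `(P(0))` at `y₀`. -/
def LagrangeMultiplier (Ω : Set X) (F : X → Set Y) (G : X → Set Z) (Zp : Set Z) (Yp : Set Y)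
    (Δ : Z → Set Y) (y0 : Y) : Prop :=
  y0 ∈ closure (Umap Ω F G Zp Δ) ∧ Umap Ω F G Zp Δ ∩ ({y0} - Yp) ⊆ {y0} + Yp

/-- The graph of the Lagrange process of `(P(0))` at `y₀`. -/
def GraphLagrange (Ω : Set X) (F : X → Set Y) (G : X → Set Z) (Zp : Set Z) (Yp : Set Y)
    (y0 : Y) : Set (Z × Y) :=
  {p : Z × Y | ∀ q ∈ Sdual Ω F G Zp Yp y0, q.1 p.1 ≤ q.2 p.2}

/-- The Lagrange process of `(P(0))` at `y₀`, as a set-valued map. -/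
def Lagrange (Ω : Set X) (F : X → Set Y) (G : X → Set Z) (Zp : Set Z) (Yp : Set Y) (y0 : Y)
    (z : Z) : Set Y :=
  {y | (z, y) ∈ GraphLagrange Ω F G Zp Yp y0}

/-- The contingent derivative of a set-valued map `H` at `(z₀, y₀)`. -/
def contingentDeriv (H : Z → Set Y) (z0 : Z) (y0 : Y) (z : Z) : Set Y :=
  {y | (z, y) ∈ contingentCone (graph H) (z0, y0)}

/-- The S-derivative (Shi derivative) of a set-valued map `H` at `(z₀, y₀)`. -/
def Sderiv (H : Z → Set Y) (z0 : Z) (y0 : Y) (z : Z) : Set Y :=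
  {y | ∃ (h : ℕ → ℝ) (zn : ℕ → Z) (yn : ℕ → Y),
    (∀ n, 0 < h n) ∧ Filter.Tendsto zn Filter.atTop (𝓝 z) ∧
    Filter.Tendsto yn Filter.atTop (𝓝 y) ∧
    Filter.Tendsto (fun n => h n • zn n) Filter.atTop (𝓝 (0:Z)) ∧
    ∀ n, y0 + h n • yn n ∈ H (z0 + h n • zn n)}

/-- The standing assumptions of the paper: `Y₊`, `Z₊` proper solid convex cones, `Ω` nonempty
convex, `F` is `Y₊`-convex and `G` is `Z₊`-convex. -/
def StandingHyp (Ω : Set X) (F : X → Set Y) (G : X → Set Z) (Zp : Set Z) (Yp : Set Y) : Prop :=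
  IsCone Yp ∧ IsProper Yp ∧ IsSolid Yp ∧ Convex ℝ Yp ∧
  IsCone Zp ∧ IsProper Zp ∧ IsSolid Zp ∧ Convex ℝ Zp ∧
  Ω.Nonempty ∧ Convex ℝ Ω ∧
  Convex ℝ {p : X × Y | p.1 ∈ Ω ∧ p.2 ∈ F p.1 + Yp} ∧
  Convex ℝ {p : X × Z | p.1 ∈ Ω ∧ p.2 ∈ G p.1 + Zp}

end SV

variable {X Y Z : Type*}
  [NormedAddCommGroup X] [NormedSpace ℝ X]
  [NormedAddCommGroup Y] [NormedSpace ℝ Y]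
  [NormedAddCommGroup Z] [NormedSpace ℝ Z]

/-!
The contingent cone of a convex set `A` at a point `w` of its closure is the closed cone generated
by `A - w`. By Farkas' lemma it therefore consists of the vectors `v` with `0 ≤ f v` for every
continuous linear functional `f` that is minimized over `A` at `w`.

For `A = graph (V + Y₊)` and `w = (0, y₀)`, splitting `f` as `(z*, y*)` identifies these functionals
with the pairs satisfying the right-hand inequality in the definition of `S_{Y₊}(y₀)`. The left-hand
inequality is then automatic, because the graph is stable under adding elements of `Z₊ × Y₊`.
The conditions `z*(-z) ≤ y*(y)` defining the Lagrange process at `-z` thus say exactly that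
`(z, y)` lies in the contingent cone.
-/

section DualCone

variable {E : Type*} [TopologicalSpace E] [AddCommGroup E] [IsTopologicalAddGroup E]
  [Module ℝ E] [ContinuousSMul ℝ E] [LocallyConvexSpace ℝ E]

theorem mem_closure_convexCone_iff {C : ConvexCone ℝ E} (hC : (C : Set E).Nonempty) {v : E} :
    v ∈ closure (C : Set E) ↔ ∀ f : StrongDual ℝ E, (∀ c ∈ C, 0 ≤ f c) → 0 ≤ f v := by
  constructor
  · intro hv f hf
    exact closure_minimal hf (isClosed_Ici.preimage f.continuous) hv
  · intro hv
    obtain ⟨K, hK⟩ : ∃ K : ProperCone ℝ E, (K : ConvexCone ℝ E) = C.closure :=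
      CanLift.prf C.closure ⟨hC.closure, isClosed_closure⟩
    have mem_K {x : E} : x ∈ K ↔ x ∈ closure (C : Set E) := SetLike.ext_iff.mp hK x
    by_contra hvC
    obtain ⟨f, hfK, hfv⟩ := K.hyperplane_separation_point (mt mem_K.mp hvC)
    exact hfv.not_ge (hv f fun c hc ↦ hfK c (mem_K.mpr (subset_closure hc)))

theorem mem_closure_hull_iff {s : Set E} (hs : s.Nonempty) {v : E} :
    v ∈ closure (ConvexCone.hull ℝ s : Set E) ↔
      ∀ f : StrongDual ℝ E, (∀ a ∈ s, 0 ≤ f a) → 0 ≤ f v := by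
  rw [mem_closure_convexCone_iff (hs.mono ConvexCone.subset_hull)]
  refine forall_congr' fun f ↦ imp_congr_left ?_
  exact ConvexCone.hull_le_iff (C := (ConvexCone.positive ℝ ℝ).comap (f : E →ₗ[ℝ] ℝ))

end DualCone

section ContingentCone

variable {E : Type*} [NormedAddCommGroup E] [NormedSpace ℝ E] {A : Set E} {w v : E}

theorem infDist_add_smul_div_le (hw : w ∈ closure A) {h : ℝ} (hh : 0 < h) :
    Metric.infDist (w + h • v) A / h ≤ ‖v‖ := by
  rw [div_le_iff₀ hh, ← Metric.infDist_closure]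
  calc Metric.infDist (w + h • v) (closure A) ≤ dist (w + h • v) w :=
        Metric.infDist_le_dist_of_mem hw
    _ = ‖v‖ * h := by
        rw [dist_self_add_left, norm_smul, Real.norm_of_nonneg hh.le, mul_comm]

theorem mem_contingentCone_iff_frequently (hw : w ∈ closure A) :
    v ∈ contingentCone A w ↔
      ∀ ε > 0, ∃ᶠ h in 𝓝[>] (0 : ℝ), Metric.infDist (w + h • v) A / h < ε := by
  have h_nonneg : ∀ᶠ h in 𝓝[>] (0 : ℝ), 0 ≤ Metric.infDist (w + h • v) A / h := by
    filter_upwards [self_mem_nhdsWithin] with h hh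
    exact div_nonneg Metric.infDist_nonneg (Set.mem_Ioi.mp hh).le
  have h_le : ∀ᶠ h in 𝓝[>] (0 : ℝ), Metric.infDist (w + h • v) A / h ≤ ‖v‖ := by
    filter_upwards [self_mem_nhdsWithin] with h hh
    exact infDist_add_smul_div_le hw hh
  have h_cobdd := (isBoundedUnder_of_eventually_le h_le).isCoboundedUnder_ge
  have h_bdd := isBoundedUnder_of_eventually_ge h_nonneg
  rw [← liminf_le_iff h_cobdd h_bdd]
  exact (le_liminf_of_le h_cobdd h_nonneg).ge_iff_eq'.symm

theorem contingentCone_subset_closure_hull (hw : w ∈ closure A) :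
    contingentCone A w ⊆ closure (ConvexCone.hull ℝ (A - {w}) : Set E) := by
  intro v hv
  refine Metric.mem_closure_iff.mpr fun ε hε ↦ ?_
  obtain ⟨h, h_lt, hh⟩ := (((mem_contingentCone_iff_frequently hw).mp hv ε hε).and_eventually
    self_mem_nhdsWithin).exists
  replace hh : 0 < h := hh
  rw [div_lt_iff₀ hh, Metric.infDist_lt_iff (closure_nonempty_iff.mp ⟨w, hw⟩)] at h_lt
  obtain ⟨a, ha, hva⟩ := h_lt
  refine ⟨h⁻¹ • (a - w), ConvexCone.smul_mem _ (inv_pos.mpr hh)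
    (ConvexCone.subset_hull (Set.sub_mem_sub ha rfl)), ?_⟩
  calc dist v (h⁻¹ • (a - w)) = dist (h⁻¹ • (h • v)) (h⁻¹ • (a - w)) := by
        rw [inv_smul_smul₀ hh.ne']
    _ = h⁻¹ * dist (w + h • v) a := by
        rw [dist_smul₀, Real.norm_of_nonneg (inv_nonneg.mpr hh.le), dist_eq_norm, dist_eq_norm,
          sub_sub_eq_add_sub, add_comm w]
    _ < ε := by rwa [inv_mul_lt_iff₀ hh, mul_comm]

theorem closure_hull_subset_contingentCone (hA : Convex ℝ A) (hw : w ∈ closure A) :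
    closure (ConvexCone.hull ℝ (A - {w}) : Set E) ⊆ contingentCone A w := by
  intro v hv
  refine (mem_contingentCone_iff_frequently hw).mpr fun ε hε ↦ Eventually.frequently ?_
  obtain ⟨c, hc, hvc⟩ := Metric.mem_closure_iff.mp hv ε hε
  obtain ⟨r, hr, b, hb, rfl⟩ :=
    (ConvexCone.mem_hull_of_convex (hA.sub (convex_singleton w))).mp hc
  rw [Set.sub_singleton] at hb
  obtain ⟨a, ha, rfl⟩ := hb
  filter_upwards [Ioo_mem_nhdsGT (inv_pos.mpr hr)] with h ⟨hh, hhr⟩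
  have hhr_le : h * r ≤ 1 :=
    (mul_lt_mul_of_pos_right hhr hr).le.trans_eq (inv_mul_cancel₀ hr.ne')
  have h_segment : w + h • r • (a - w) ∈ closure A := by
    rw [smul_smul]
    exact hA.closure.add_smul_sub_mem hw (subset_closure ha) ⟨by positivity, hhr_le⟩
  rw [div_lt_iff₀ hh, ← Metric.infDist_closure]
  calc Metric.infDist (w + h • v) (closure A)
      ≤ dist (w + h • v) (w + h • r • (a - w)) := Metric.infDist_le_dist_of_mem h_segment
    _ = dist v (r • (a - w)) * h := by
        rw [dist_add_left, dist_smul₀, Real.norm_of_nonneg hh.le, mul_comm]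
    _ < ε * h := by gcongr

theorem contingentCone_eq_closure_hull (hA : Convex ℝ A) (hw : w ∈ closure A) :
    contingentCone A w = closure (ConvexCone.hull ℝ (A - {w}) : Set E) :=
  (contingentCone_subset_closure_hull hw).antisymm (closure_hull_subset_contingentCone hA hw)

theorem mem_contingentCone_iff_forall_dual (hA : Convex ℝ A) (hw : w ∈ closure A) :
    v ∈ contingentCone A w ↔ ∀ f : StrongDual ℝ E, (∀ a ∈ A, f w ≤ f a) → 0 ≤ f v := by
  have hA_nonempty : A.Nonempty := closure_nonempty_iff.mp ⟨w, hw⟩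
  rw [contingentCone_eq_closure_hull hA hw,
    mem_closure_hull_iff (hA_nonempty.sub (Set.singleton_nonempty w))]
  simp only [Set.sub_singleton, Set.forall_mem_image, map_sub, sub_nonneg]

end ContingentCone

theorem add_mem_closure_of_add_subset {E : Type*} [TopologicalSpace E] [Add E] [ContinuousAdd E]
    {A K : Set E} (hAK : A + K ⊆ A) {w k : E} (hw : w ∈ closure A) (hk : k ∈ K) :
    w + k ∈ closure A :=
  map_mem_closure (f := (· + k)) (by fun_prop) hw fun _ ha ↦ hAK (Set.add_mem_add ha hk)

section ConvexCones

variable {E : Type*} [NormedAddCommGroup E] [NormedSpace ℝ E] {K : Set E}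

theorem IsCone.zero_mem (hK : IsCone K) : (0 : E) ∈ K := by
  obtain ⟨x, hx⟩ := hK.1
  simpa only [zero_smul] using hK.2 0 le_rfl x hx

theorem IsCone.add_subset (hK : IsCone K) (hconv : Convex ℝ K) : K + K ⊆ K := by
  refine Set.add_subset_iff.mpr fun x hx y hy ↦ ?_
  have h_double : (2 : ℝ) • midpoint ℝ x y = x + y := by
    rw [midpoint_eq_smul_add, invOf_eq_inv, smul_inv_smul₀ two_ne_zero]
  exact h_double ▸ hK.2 2 zero_le_two _ (hconv.midpoint_mem hx hy)

end ConvexCones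

section ValueMap

variable {X Y Z : Type*} [NormedAddCommGroup Y] [NormedAddCommGroup Z]
  {Ω : Set X} {F : X → Set Y} {G : X → Set Z} {Zp : Set Z} {Yp : Set Y} {y0 : Y}

theorem mem_GraphVplus_iff {p : Z × Y} :
    p ∈ GraphVplus Ω F G Zp Yp ↔ ∃ x ∈ Ω, p.1 ∈ G x + Zp ∧ p.2 ∈ F x + Yp := by
  have inter_nonempty_iff {x : X} : (G x ∩ ({p.1} - Zp)).Nonempty ↔ p.1 ∈ G x + Zp := by
    simp only [Set.Nonempty, Set.mem_inter_iff, Set.singleton_sub, Set.mem_image, Set.mem_add,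
      sub_eq_iff_eq_add, eq_comm (a := p.1)]
  simp only [GraphVplus, Vmap, Smap, Set.mem_ofPred_eq, Set.iUnion_add, Set.mem_iUnion,
    inter_nonempty_iff, exists_prop, and_assoc]

theorem GraphVplus_add_prod_subset (hYp : Yp + Yp ⊆ Yp) (hZp : Zp + Zp ⊆ Zp) :
    GraphVplus Ω F G Zp Yp + Zp ×ˢ Yp ⊆ GraphVplus Ω F G Zp Yp := by
  rintro _ ⟨p, hp, k, ⟨hkZ, hkY⟩, rfl⟩
  obtain ⟨x, hx, hpG, hpF⟩ := mem_GraphVplus_iff.mp hp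
  have hG : p.1 + k.1 ∈ G x + (Zp + Zp) := add_assoc (G x) Zp Zp ▸ Set.add_mem_add hpG hkZ
  have hF : p.2 + k.2 ∈ F x + (Yp + Yp) := add_assoc (F x) Yp Yp ▸ Set.add_mem_add hpF hkY
  exact mem_GraphVplus_iff.mpr
    ⟨x, hx, Set.add_subset_add_left hZp hG, Set.add_subset_add_left hYp hF⟩

variable [NormedSpace ℝ Y] [NormedSpace ℝ Z]

theorem mem_Sdual_iff (hYp : Yp + Yp ⊆ Yp) (hZp : Zp + Zp ⊆ Zp)
    (hy0 : ((0 : Z), y0) ∈ closure (GraphVplus Ω F G Zp Yp))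
    {q : (Z →L[ℝ] ℝ) × (Y →L[ℝ] ℝ)} :
    q ∈ Sdual Ω F G Zp Yp y0 ↔
      ∀ p ∈ GraphVplus Ω F G Zp Yp, q.1.coprod q.2 (0, y0) ≤ q.1.coprod q.2 p := by
  constructor
  · intro hq p hp
    simpa only [ContinuousLinearMap.coprod_apply, map_zero, zero_add] using hq.2 p hp
  · intro hq
    refine ⟨fun z hz y hy ↦ ?_, fun p hp ↦ ?_⟩
    · rw [Set.singleton_sub] at hy
      obtain ⟨l, hl, rfl⟩ := hy
      have h_shift : ((0 : Z), y0) + (-z, l) ∈ closure (GraphVplus Ω F G Zp Yp) :=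
        add_mem_closure_of_add_subset (GraphVplus_add_prod_subset hYp hZp) hy0 ⟨hz, hl⟩
      have h_le : q.1.coprod q.2 (0, y0) ≤ q.1.coprod q.2 ((0, y0) + (-z, l)) :=
        closure_minimal hq (isClosed_le continuous_const (q.1.coprod q.2).continuous) h_shift
      rw [map_add, le_add_iff_nonneg_right, ContinuousLinearMap.coprod_apply, map_neg] at h_le
      rw [map_sub]
      linarith
    · simpa only [ContinuousLinearMap.coprod_apply, map_zero, zero_add] using hq p hp

theorem mem_Lagrange_neg_iff (hYp : Yp + Yp ⊆ Yp) (hZp : Zp + Zp ⊆ Zp)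
    (hy0 : ((0 : Z), y0) ∈ closure (GraphVplus Ω F G Zp Yp)) {z : Z} {y : Y} :
    y ∈ Lagrange Ω F G Zp Yp y0 (-z) ↔
      ∀ f : StrongDual ℝ (Z × Y),
        (∀ p ∈ GraphVplus Ω F G Zp Yp, f (0, y0) ≤ f p) → 0 ≤ f (z, y) := by
  have coprod_surjective : Function.Surjective
      fun q : (Z →L[ℝ] ℝ) × (Y →L[ℝ] ℝ) ↦ q.1.coprod q.2 :=
    (ContinuousLinearMap.coprodEquiv (R := ℝ) (S := ℝ)).surjective
  rw [coprod_surjective.forall]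
  refine forall_congr' fun q ↦ imp_congr (mem_Sdual_iff hYp hZp hy0) ?_
  rw [ContinuousLinearMap.coprod_apply, map_neg, neg_le_iff_add_nonneg']

variable [NormedAddCommGroup X] [NormedSpace ℝ X]

theorem convex_GraphVplus (hF : Convex ℝ {p : X × Y | p.1 ∈ Ω ∧ p.2 ∈ F p.1 + Yp})
    (hG : Convex ℝ {p : X × Z | p.1 ∈ Ω ∧ p.2 ∈ G p.1 + Zp}) :
    Convex ℝ (GraphVplus Ω F G Zp Yp) := by
  intro p hp q hq a b ha hb hab
  obtain ⟨x, hx, hpG, hpF⟩ := mem_GraphVplus_iff.mp hp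
  obtain ⟨x', hx', hqG, hqF⟩ := mem_GraphVplus_iff.mp hq
  obtain ⟨hmem, hmemF⟩ := hF (x := (x, p.2)) ⟨hx, hpF⟩ (y := (x', q.2)) ⟨hx', hqF⟩ ha hb hab
  obtain ⟨-, hmemG⟩ := hG (x := (x, p.1)) ⟨hx, hpG⟩ (y := (x', q.1)) ⟨hx', hqG⟩ ha hb hab
  exact mem_GraphVplus_iff.mpr ⟨a • x + b • x', hmem, hmemG, hmemF⟩

theorem stmt_13_general (hYp : Yp + Yp ⊆ Yp) (hZp : Zp + Zp ⊆ Zp)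
    (hF : Convex ℝ {p : X × Y | p.1 ∈ Ω ∧ p.2 ∈ F p.1 + Yp})
    (hG : Convex ℝ {p : X × Z | p.1 ∈ Ω ∧ p.2 ∈ G p.1 + Zp})
    (hy0 : ((0 : Z), y0) ∈ closure (GraphVplus Ω F G Zp Yp)) (z : Z) :
    Lagrange Ω F G Zp Yp y0 (-z) = contingentDeriv (VplusMap Ω F G Zp Yp) 0 y0 z := by
  ext y
  have h_contingent := mem_contingentCone_iff_forall_dual (v := (z, y))
    (convex_GraphVplus hF hG) hy0
  exact (mem_Lagrange_neg_iff hYp hZp hy0).trans h_contingent.symm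

end ValueMap

theorem stmt_13 (Ω : Set X) (F : X → Set Y) (G : X → Set Z) (Zp : Set Z) (Yp : Set Y)
    (hSt : StandingHyp Ω F G Zp Yp)
    (hYpPointed : IsPointed Yp)
    (y0 : Y) (hy0 : MinimalPoint Ω F G Zp Yp y0)
    (hSl : Slater Ω F G Zp) :
    ∀ z : Z, Lagrange Ω F G Zp Yp y0 (-z) =
      contingentDeriv (VplusMap Ω F G Zp Yp) 0 y0 z := by
  obtain ⟨hYcone, -, -, hYconv, hZcone, -, -, hZconv, -, -, hF, hG⟩ := hSt
  exact stmt_13_general (hYcone.add_subset hYconv) (hZcone.add_subset hZconv) hF hG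
    (subset_closure ⟨y0, hy0.1, 0, hYcone.zero_mem, add_zero y0⟩)

end Paper
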